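/- Let G be a finite group acting by homeomorphisms on a Hausdorff topological space M, let M/G be the orbit space with the quotient topology and p : M → M/G the quotient map. Then p has the path lifting property: for every continuous path γ : [0,1] → M/G and every point x ∈ M with p(x) = γ(0), there exists a continuous path γ̃ : [0,1] → M with γ̃(0) = x and p ∘ γ̃ = γ. -/

import Mathlib

/-!
The quotient map is open, so continuity of `γ` can be expressed upstairs: if `c` is any
(set-theoretic) lift of `γ`, then points of the orbit of `c s` enter every neighbourhood of `c t` as
`s → t`. This is `OrbitContinuous H c`, stated for a subgroup `H ≤ G`, and the theorem follows from
`OrbitContinuous.exists_lift`: an `H`-orbit-continuous `c : ℝ → M` can be made continuous by moving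
each `c s` within its `H`-orbit. The starting point is then corrected by a translation.

The proof is by strong induction on `H`. Call `t` *fixed* if all of `H` fixes `c t`.
* Near a non-fixed `t`, let `K < H` be the stabilizer of `c t` and let `U` be a neighbourhood of
  `c t` disjoint from its translates by elements of `H` outside `K`. Moving `c` into `U` gives a
  `K`-orbit-continuous function, which has a continuous lift by induction (`exists_local_lift`).
* The non-fixed parameters form an open subset of `ℝ`. On compact intervals inside it, local lifts
  are glued after translation, and an exhaustion by compact intervals gives a lift on each
  component.
* At a fixed `t` *every* pointwise choice in the orbits is continuous
  (`OrbitContinuous.continuousAt_of_fixed`), so the lifts on the components and the values of `c` at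
  the fixed parameters fit together to a continuous function.
-/

open MulAction

namespace PathLifting

open Set Filter Topology

variable {G M : Type} [Group G] [TopologicalSpace M] [MulAction G M]

/-- `c : ℝ → M` is continuous modulo the action of the subgroup `H`: the composite of `c` with
the projection `M → M/H` is continuous, expressed without mentioning the quotient. -/
def OrbitContinuous (H : Subgroup G) (c : ℝ → M) : Prop :=
  ∀ t, ∀ V ∈ 𝓝 (c t), ∀ᶠ s in 𝓝 t, ∃ g ∈ H, g • c s ∈ V

/-- `f` is a continuous lift over `S` of the path of `H`-orbits represented by `c`. -/
def IsLift (H : Subgroup G) (c : ℝ → M) (S : Set ℝ) (f : ℝ → M) : Prop :=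
  ContinuousOn f S ∧ ∀ s ∈ S, ∃ h ∈ H, f s = h • c s

lemma IsLift.mono {H : Subgroup G} {c f : ℝ → M} {S T : Set ℝ} (hf : IsLift H c T f)
    (h : S ⊆ T) : IsLift H c S f :=
  ⟨hf.1.mono h, fun s hs => hf.2 s (h hs)⟩

lemma IsLift.glue {H : Subgroup G} {c f g : ℝ → M} {u v w : ℝ} (huv : u ≤ v) (hvw : v ≤ w)
    (hf : IsLift H c (Icc u v) f) (hg : IsLift H c (Icc v w) g) (e : f v = g v) :
    ∃ f', IsLift H c (Icc u w) f' ∧ EqOn f f' (Icc u v) ∧ EqOn g f' (Icc v w) := by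
  classical
  let f' : ℝ → M := fun s => if s ≤ v then f s else g s
  have h1 : EqOn f f' (Icc u v) := fun s hs => by simp [f', hs.2]
  have h2 : EqOn g f' (Icc v w) := fun s hs => by
    rcases hs.1.eq_or_lt with rfl | h
    · simp [f', e]
    · simp [f', not_le.2 h]
  refine ⟨f', ⟨?_, fun s hs => ?_⟩, h1, h2⟩
  · rw [← Icc_union_Icc_eq_Icc huv hvw]
    exact (hf.1.congr h1.symm).union_of_isClosed (hg.1.congr h2.symm) isClosed_Icc isClosed_Icc
  · rcases le_total s v with h | h
    · rw [← h1 ⟨hs.1, h⟩]; exact hf.2 s ⟨hs.1, h⟩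
    · rw [← h2 ⟨h, hs.2⟩]; exact hg.2 s ⟨h, hs.2⟩

variable [ContinuousConstSMul G M]

lemma OrbitContinuous.congr {H : Subgroup G} {c d : ℝ → M} (hc : OrbitContinuous H c)
    (hd : ∀ s, ∃ h ∈ H, d s = h • c s) : OrbitContinuous H d := by
  intro t V hV
  obtain ⟨h, hh, e⟩ := hd t
  have hV' : (fun x => h • x) ⁻¹' V ∈ 𝓝 (c t) :=
    (continuous_const_smul h).continuousAt.preimage_mem_nhds (by rwa [← e])
  filter_upwards [hc t _ hV'] with s hs
  obtain ⟨g, hg, hgs⟩ := hs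
  obtain ⟨k, hk, ek⟩ := hd s
  refine ⟨h * g * k⁻¹, H.mul_mem (H.mul_mem hh hg) (H.inv_mem hk), ?_⟩
  rw [ek, smul_smul]
  simpa [mul_smul] using hgs

/-- Where the orbit is a single point, every pointwise choice in the orbits is continuous. -/
lemma OrbitContinuous.continuousAt_of_fixed [Finite G] {H : Subgroup G} {c d : ℝ → M}
    (hc : OrbitContinuous H c) (hd : ∀ s, ∃ h ∈ H, d s = h • c s) {t : ℝ}
    (ht : ∀ h ∈ H, h • c t = c t) : ContinuousAt d t := by
  intro V hV
  obtain ⟨h, hh, e⟩ := hd t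
  rw [e, ht h hh] at hV
  have hV' : (⋂ k : H, (fun x => (k : G) • x) ⁻¹' V) ∈ 𝓝 (c t) := by
    refine iInter_mem.2 fun k => ?_
    exact (continuous_const_smul (k : G)).continuousAt.preimage_mem_nhds (by rwa [ht k k.2])
  rw [mem_map]
  filter_upwards [hc t _ hV'] with s hs
  obtain ⟨g, hg, hgs⟩ := hs
  obtain ⟨k, hk, ek⟩ := hd s
  have := mem_iInter.1 hgs ⟨k * g⁻¹, H.mul_mem hk (H.inv_mem hg)⟩
  simpa [ek, smul_smul] using this

/-- A neighbourhood of `x` disjoint from its translates by the elements of `H` moving `x`. -/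
lemma exists_slice [Finite G] [T2Space M] (H : Subgroup G) (x : M) :
    ∃ U, IsOpen U ∧ x ∈ U ∧ ∀ g ∈ H, ∀ y ∈ U, g • y ∈ U → g • x = x := by
  have key : ∀ g : G, ∃ U, IsOpen U ∧ x ∈ U ∧ ∀ y ∈ U, g • y ∈ U → g • x = x := by
    intro g
    by_cases hg : g • x = x
    · exact ⟨univ, isOpen_univ, mem_univ _, fun _ _ _ => hg⟩
    · obtain ⟨A, B, hA, hB, hxA, hxB, hAB⟩ := t2_separation hg
      refine ⟨B ∩ (fun y => g • y) ⁻¹' A, hB.inter (hA.preimage (continuous_const_smul g)),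
        ⟨hxB, hxA⟩, fun y hy hgy => ?_⟩
      exact (disjoint_left.1 hAB hy.2 hgy.1).elim
  choose U hU hxU h using key
  refine ⟨⋂ g, U g, isOpen_iInter_of_finite hU, mem_iInter.2 hxU, fun g _ y hy hgy => ?_⟩
  exact h g y (mem_iInter.1 hy g) (mem_iInter.1 hgy g)

/-- Induction step near a parameter `t` whose point is moved by `H`: nearby points are moved as
well, and a lift exists over a neighbourhood of `t`. -/
lemma exists_local_lift [Finite G] [T2Space M] {H : Subgroup G}
    (ih : ∀ K < H, ∀ c : ℝ → M, OrbitContinuous K c → ∃ f, IsLift K c univ f)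
    {c : ℝ → M} (hc : OrbitContinuous H c) {t : ℝ} (ht : ¬ ∀ h ∈ H, h • c t = c t) :
    (∀ᶠ s in 𝓝 t, ¬ ∀ h ∈ H, h • c s = c s) ∧ ∃ W ∈ 𝓝 t, ∃ f, IsLift H c W f := by
  obtain ⟨U, hU, htU, hUH⟩ := exists_slice H (c t)
  have hW := hc t U (hU.mem_nhds htU)
  constructor
  · filter_upwards [hW] with s hs hfix
    obtain ⟨g, hg, hgs⟩ := hs
    refine ht fun h hh => hUH h hh _ hgs ?_
    rw [hfix g hg] at hgs ⊢
    rwa [hfix h hh]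
  -- `d` moves `c` into `U` wherever possible
  have hd : ∀ s, ∃ y, (∃ h ∈ H, y = h • c s) ∧ ((∃ g ∈ H, g • c s ∈ U) → y ∈ U) := by
    intro s
    by_cases h : ∃ g ∈ H, g • c s ∈ U
    · obtain ⟨g, hg, hgs⟩ := h
      exact ⟨_, ⟨g, hg, rfl⟩, fun _ => hgs⟩
    · exact ⟨c s, ⟨1, H.one_mem, (one_smul _ _).symm⟩, fun h' => (h h').elim⟩
  choose d hdc hdU using hd
  have hdo := hc.congr hdc
  obtain ⟨ε, hε, hball⟩ := Metric.nhds_basis_closedBall.mem_iff.1 hW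
  rw [Real.closedBall_eq_Icc] at hball
  have hle : t - ε ≤ t + ε := by linarith
  let K : Subgroup G := H ⊓ stabilizer G (c t)
  have hK : K < H := by
    refine lt_of_le_of_ne inf_le_left fun e => ht fun h hh => ?_
    have : h ∈ K := by rw [e]; exact hh
    exact this.2
  let π : ℝ → ℝ := fun s => projIcc (t - ε) (t + ε) hle s
  have hπ : Continuous π := continuous_subtype_val.comp continuous_projIcc
  have hπU : ∀ s, d (π s) ∈ U := fun s => hdU _ (hball (projIcc (t - ε) (t + ε) hle s).2)
  have hKo : OrbitContinuous K (d ∘ π) := by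
    intro s V hV
    have h1 := hdo (π s) (V ∩ U) (inter_mem hV (hU.mem_nhds (hπU s)))
    filter_upwards [hπ.continuousAt.eventually h1] with r hr
    obtain ⟨g, hg, hgV, hgU⟩ := hr
    exact ⟨g, ⟨hg, hUH g hg _ (hπU r) hgU⟩, hgV⟩
  obtain ⟨f, hfc, hf⟩ := ih K hK _ hKo
  refine ⟨Icc (t - ε) (t + ε), Icc_mem_nhds (by linarith) (by linarith), f,
    hfc.mono (subset_univ _), fun s hs => ?_⟩
  obtain ⟨k, hk, e⟩ := hf s (mem_univ _)
  obtain ⟨h, hh, e'⟩ := hdc s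
  refine ⟨k * h, H.mul_mem hk.1 hh, ?_⟩
  have : π s = s := by simp [π, projIcc_of_mem hle hs]
  rw [e, Function.comp_apply, this, e', smul_smul]

lemma IsLift.smul {H : Subgroup G} {c f : ℝ → M} {S : Set ℝ} (hf : IsLift H c S f) {k : G}
    (hk : k ∈ H) : IsLift H c S (fun s => k • f s) := by
  refine ⟨hf.1.const_smul k, fun s hs => ?_⟩
  obtain ⟨h, hh, e⟩ := hf.2 s hs
  exact ⟨k * h, H.mul_mem hk hh, by simp only [e, smul_smul]⟩

/-- A lift can be translated so as to agree with another lift at a common parameter. -/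
lemma IsLift.exists_translate {H : Subgroup G} {c f g : ℝ → M} {S T : Set ℝ} {v : ℝ}
    (hf : IsLift H c S f) (hg : IsLift H c T g) (hvS : v ∈ S) (hvT : v ∈ T) :
    ∃ g', IsLift H c T g' ∧ f v = g' v := by
  obtain ⟨h, hh, e⟩ := hf.2 v hvS
  obtain ⟨k, hk, e'⟩ := hg.2 v hvT
  exact ⟨_, hg.smul (H.mul_mem hh (H.inv_mem hk)), by simp [e, e', smul_smul]⟩

lemma exists_lift_Icc {H : Subgroup G} {c : ℝ → M} {u v : ℝ} (huv : u ≤ v)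
    (hloc : ∀ t ∈ Icc u v, ∃ W ∈ 𝓝 t, ∃ f, IsLift H c W f) :
    ∃ f, IsLift H c (Icc u v) f := by
  choose! W hW hf using hloc
  obtain ⟨t, t0, tm, ⟨m, hm⟩, ht⟩ := exists_monotone_Icc_subset_open_cover_Icc huv
    (c := fun i : Icc u v => Subtype.val ⁻¹' interior (W i))
    (fun i => isOpen_interior.preimage continuous_subtype_val)
    (fun i _ => mem_iUnion.2 ⟨i, mem_interior_iff_mem_nhds.2 (hW i i.2)⟩)
  have step : ∀ n, ∃ f, IsLift H c (Icc (t n : ℝ) (t (n + 1))) f := by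
    intro n
    obtain ⟨i, hi⟩ := ht n
    obtain ⟨f, hf⟩ := hf i i.2
    refine ⟨f, hf.mono fun s hs => ?_⟩
    have hs' : s ∈ Icc u v := ⟨(t n).2.1.trans hs.1, hs.2.trans (t (n + 1)).2.2⟩
    exact interior_subset (@hi ⟨s, hs'⟩ hs)
  have all : ∀ n, ∃ f, IsLift H c (Icc u (t n)) f := by
    intro n
    induction n with
    | zero =>
      obtain ⟨f, hf⟩ := step 0
      refine ⟨f, hf.mono ?_⟩
      rw [t0]
      exact Icc_subset_Icc_right (t 1).2.1
    | succ n ihn =>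
      obtain ⟨f, hf⟩ := ihn
      obtain ⟨g, hg⟩ := step n
      have hle : (t n : ℝ) ≤ t (n + 1) := tm n.le_succ
      obtain ⟨g', hg', e⟩ := hf.exists_translate hg (right_mem_Icc.2 (t n).2.1)
        (left_mem_Icc.2 hle)
      obtain ⟨f', hf', -⟩ := hf.glue (t n).2.1 hle hg' e
      exact ⟨f', hf'⟩
  have := all m
  rwa [hm m le_rfl] at this

lemma IsLift.extend {H : Subgroup G} {c f : ℝ → M} {u v u' v' : ℝ} (hu : u' ≤ u) (huv : u ≤ v)
    (hv : v ≤ v') (hloc : ∀ t ∈ Icc u' v', ∃ W ∈ 𝓝 t, ∃ f, IsLift H c W f)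
    (hf : IsLift H c (Icc u v) f) :
    ∃ f', IsLift H c (Icc u' v') f' ∧ EqOn f f' (Icc u v) := by
  obtain ⟨g, hg⟩ := exists_lift_Icc (H := H) (c := c) hv
    fun t ht => hloc t ⟨(hu.trans huv).trans ht.1, ht.2⟩
  obtain ⟨g, hg, e⟩ := hf.exists_translate hg (right_mem_Icc.2 huv) (left_mem_Icc.2 hv)
  obtain ⟨f₁, hf₁, e₁, -⟩ := hf.glue huv hv hg e
  obtain ⟨k, hk⟩ := exists_lift_Icc (H := H) (c := c) hu
    fun t ht => hloc t ⟨ht.1, ht.2.trans (huv.trans hv)⟩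
  obtain ⟨k, hk, e⟩ := hf₁.exists_translate hk (left_mem_Icc.2 (huv.trans hv))
    (right_mem_Icc.2 hu)
  obtain ⟨f₂, hf₂, -, e₂⟩ := hk.glue hu (huv.trans hv) hf₁ e.symm
  exact ⟨f₂, hf₂, e₁.trans (e₂.mono (Icc_subset_Icc_right hv))⟩

lemma isOpen_ordConnectedComponent {O : Set ℝ} (hO : IsOpen O) (m : ℝ) :
    IsOpen (ordConnectedComponent O m) := by
  refine isOpen_iff_mem_nhds.2 fun t ht => ?_
  have h := ordConnectedComponent_mem_nhds.2 (hO.mem_nhds (ordConnectedComponent_subset ht))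
  rwa [← ordConnectedComponent_eq ht] at h

/-- Local lifts over an open set can be replaced by a lift over each of its components. -/
lemma exists_lift_component {H : Subgroup G} {c : ℝ → M} {O : Set ℝ} (hO : IsOpen O)
    (hloc : ∀ t ∈ O, ∃ W ∈ 𝓝 t, ∃ f, IsLift H c W f) {m : ℝ} (hm : m ∈ O) :
    ∃ f, IsLift H c (ordConnectedComponent O m) f := by
  set C := ordConnectedComponent O m with hC
  have hCo : IsOpen C := isOpen_ordConnectedComponent hO m
  have hmC : m ∈ C := self_mem_ordConnectedComponent.2 hm
  have : Nonempty C := ⟨⟨m, hmC⟩⟩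
  have : OrdConnected C := inferInstanceAs (OrdConnected (ordConnectedComponent O m))
  obtain ⟨v, hvm, hv⟩ := exists_seq_monotone_tendsto_atTop_atTop C
  obtain ⟨u, hum, hu⟩ := exists_seq_antitone_tendsto_atTop_atBot C
  -- exhaustion of `C` by the compact intervals `[a n, b n]`, all containing `m`
  let a : ℕ → ℝ := fun n => min (u n : ℝ) m
  let b : ℕ → ℝ := fun n => max (v n : ℝ) m
  have ham : ∀ n, a n ≤ m := fun n => min_le_right _ _
  have hbm : ∀ n, m ≤ b n := fun n => le_max_right _ _
  have haC : ∀ n, a n ∈ C := fun n => by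
    rcases min_choice (u n : ℝ) m with h | h <;> simp only [a, h]
    exacts [(u n).2, hmC]
  have hbC : ∀ n, b n ∈ C := fun n => by
    rcases max_choice (v n : ℝ) m with h | h <;> simp only [b, h]
    exacts [(v n).2, hmC]
  have ha : Antitone a := fun i j hij => min_le_min_right m (hum hij)
  have hb : Monotone b := fun i j hij => max_le_max_right m (hvm hij)
  have hsub : ∀ n, Icc (a n) (b n) ⊆ C := fun n => OrdConnected.out ‹_› (haC n) (hbC n)
  have hcov : ∀ t ∈ C, ∃ n, Icc (a n) (b n) ∈ 𝓝 t := by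
    intro t ht
    obtain ⟨ε, hε, hball⟩ := Metric.nhds_basis_closedBall.mem_iff.1 (hCo.mem_nhds ht)
    rw [Real.closedBall_eq_Icc] at hball
    have hl : t - ε ∈ C := hball ⟨le_rfl, by linarith⟩
    have hr : t + ε ∈ C := hball ⟨by linarith, le_rfl⟩
    obtain ⟨n, hn1, hn2⟩ := ((hv.eventually_ge_atTop ⟨_, hr⟩).and
      (hu.eventually_le_atBot ⟨_, hl⟩)).exists
    have hn1 : t + ε ≤ v n := hn1
    have hn2 : (u n : ℝ) ≤ t - ε := hn2
    have h3 : a n ≤ u n := min_le_left _ _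
    have h4 : v n ≤ b n := le_max_left _ _
    exact ⟨n, Icc_mem_nhds (by linarith) (by linarith)⟩
  have hlocI : ∀ n, ∀ t ∈ Icc (a n) (b n), ∃ W ∈ 𝓝 t, ∃ f, IsLift H c W f :=
    fun n t ht => hloc t (ordConnectedComponent_subset (hsub n ht))
  have hab : ∀ n, a n ≤ b n := fun n => (ham n).trans (hbm n)
  have hext : ∀ n f, IsLift H c (Icc (a n) (b n)) f →
      ∃ f', IsLift H c (Icc (a (n + 1)) (b (n + 1))) f' ∧ EqOn f f' (Icc (a n) (b n)) :=
    fun n f hf => hf.extend (ha n.le_succ) (hab n) (hb n.le_succ) (hlocI (n + 1))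
  choose nxt hnxt hnxtEq using hext
  obtain ⟨f₀, hf₀⟩ := exists_lift_Icc (hab 0) (hlocI 0)
  let F : (n : ℕ) → {f // IsLift H c (Icc (a n) (b n)) f} := fun n =>
    Nat.rec ⟨f₀, hf₀⟩ (fun n f => ⟨nxt n f.1 f.2, hnxt n f.1 f.2⟩) n
  have hF : ∀ n, EqOn (F n).1 (F (n + 1)).1 (Icc (a n) (b n)) :=
    fun n => hnxtEq n (F n).1 (F n).2
  have hFF : ∀ n k, n ≤ k → EqOn (F n).1 (F k).1 (Icc (a n) (b n)) := by
    intro n k hnk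
    induction k, hnk using Nat.le_induction with
    | base => exact fun _ _ => rfl
    | succ k hk ihk =>
      exact ihk.trans ((hF k).mono (Icc_subset_Icc (ha hk) (hb hk)))
  choose! N hN using hcov
  have hfF : ∀ n, ∀ s ∈ Icc (a n) (b n), (F (N s)).1 s = (F n).1 s := by
    intro n s hs
    rcases le_total (N s) n with h | h
    · exact hFF _ _ h (mem_of_mem_nhds (hN s (hsub n hs)))
    · exact (hFF _ _ h hs).symm
  refine ⟨fun s => (F (N s)).1 s, fun t ht => ?_, fun s hs => ?_⟩
  · have h1 : ContinuousAt (F (N t)).1 t := (F (N t)).2.1.continuousAt (hN t ht)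
    refine (h1.congr ?_).continuousWithinAt
    filter_upwards [hN t ht] with s hs using (hfF _ s hs).symm
  · exact (F (N s)).2.2 s (mem_of_mem_nhds (hN s hs))

theorem OrbitContinuous.exists_lift [Finite G] [T2Space M] (H : Subgroup G) :
    ∀ c : ℝ → M, OrbitContinuous H c → ∃ f, IsLift H c univ f := by
  induction H using WellFoundedLT.induction with
  | ind H ih =>
  intro c hc
  classical
  let O : Set ℝ := {t | ¬ ∀ h ∈ H, h • c t = c t}
  have hO : IsOpen O := isOpen_iff_mem_nhds.2 fun t ht => (exists_local_lift ih hc ht).1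
  have hcomp : ∀ m ∈ O, ∃ f, IsLift H c (ordConnectedComponent O m) f := fun m hm =>
    exists_lift_component hO (fun t ht => (exists_local_lift ih hc ht).2) hm
  have : Nonempty M := ⟨c 0⟩
  choose! L hL using hcomp
  -- `ordConnectedProj` selects one base point in each component
  let f : ℝ → M := fun s => if hs : s ∈ O then L (ordConnectedProj O ⟨s, hs⟩) s else c s
  have hpO : ∀ s : O, ordConnectedProj O s ∈ O := fun s =>
    ordConnectedComponent_subset (ordConnectedProj_mem_ordConnectedComponent O s)
  have horb : ∀ s, ∃ h ∈ H, f s = h • c s := by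
    intro s
    by_cases hs : s ∈ O
    · simp only [f, dif_pos hs]
      exact (hL _ (hpO ⟨s, hs⟩)).2 s (mem_ordConnectedComponent_ordConnectedProj O ⟨s, hs⟩)
    · exact ⟨1, H.one_mem, by simp [f, hs]⟩
  refine ⟨f, continuousOn_univ.2 (continuous_iff_continuousAt.2 fun t => ?_), fun s _ => horb s⟩
  by_cases ht : t ∈ O
  · have hmem := mem_ordConnectedComponent_ordConnectedProj O ⟨t, ht⟩
    have hnhds := (isOpen_ordConnectedComponent hO _).mem_nhds hmem
    refine ((hL _ (hpO ⟨t, ht⟩)).1.continuousAt hnhds).congr ?_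
    filter_upwards [hnhds] with s hs
    have hsO : s ∈ O := ordConnectedComponent_subset hs
    have : ordConnectedProj O ⟨s, hsO⟩ = ordConnectedProj O ⟨t, ht⟩ := by
      rw [ordConnectedProj_eq]
      exact mem_ordConnectedComponent_trans (mem_ordConnectedComponent_comm.1 hs) hmem
    simp only [f, dif_pos hsO, this]
  · exact hc.continuousAt_of_fixed horb (not_not.1 ht)

end PathLifting

/-- **Armstrong's path lifting lemma.** For a finite group `G` acting by
homeomorphisms on a Hausdorff space `M`, the quotient map `p : M → M/G` to the orbit space has
the path lifting property: every continuous path `γ : [0,1] → M/G` lifts, starting at any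
point `x` of the fiber over `γ 0`, to a continuous path in `M`. -/
theorem orbit_quotient_path_lifting
    (G M : Type) [Group G] [Finite G] [TopologicalSpace M] [T2Space M] [MulAction G M]
    (hcont : ∀ g : G, Continuous fun x : M => g • x)
    (γ : unitInterval → Quotient (orbitRel G M)) (hγ : Continuous γ)
    (x : M) (hx : Quotient.mk (orbitRel G M) x = γ 0) :
    ∃ γ' : unitInterval → M, Continuous γ' ∧ γ' 0 = x ∧
      ∀ t : unitInterval, Quotient.mk (orbitRel G M) (γ' t) = γ t := by
  have : ContinuousConstSMul G M := ⟨hcont⟩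
  let π : ℝ → unitInterval := Set.projIcc 0 1 zero_le_one
  have hπ : Continuous π := continuous_projIcc
  let c : ℝ → M := fun s => (γ (π s)).out
  have hcq : ∀ s, Quotient.mk (orbitRel G M) (c s) = γ (π s) := fun s => Quotient.out_eq _
  have hc : PathLifting.OrbitContinuous (⊤ : Subgroup G) c := by
    intro t V hV
    have h1 : Quotient.mk (orbitRel G M) '' V ∈ nhds (γ (π t)) := by
      rw [← hcq t]
      exact (isOpenMap_quotient_mk'_mul (Γ := G) (T := M)).image_mem_nhds hV
    filter_upwards [(hγ.comp hπ).continuousAt.preimage_mem_nhds h1] with s hs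
    obtain ⟨y, hy, e⟩ := hs
    obtain ⟨g, hg⟩ : y ∈ orbit G (c s) := Quotient.exact (e.trans (hcq s).symm)
    exact ⟨g, Subgroup.mem_top _, by simpa [hg] using hy⟩
  obtain ⟨f, hf, hfo⟩ := PathLifting.OrbitContinuous.exists_lift ⊤ c hc
  have hπt : ∀ t : unitInterval, π t = t := fun t => Set.projIcc_val zero_le_one t
  have hfq : ∀ t : unitInterval, Quotient.mk (orbitRel G M) (f t) = γ t := by
    intro t
    obtain ⟨h, -, e⟩ := hfo t (Set.mem_univ _)
    rw [← hπt t, ← hcq, hπt t, e]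
    exact Quotient.sound ⟨h, rfl⟩
  obtain ⟨g, hg⟩ : x ∈ orbit G (f (0 : unitInterval)) := Quotient.exact (hx.trans (hfq 0).symm)
  refine ⟨fun t => g • f t, ((continuousOn_univ.1 hf).comp continuous_subtype_val).const_smul g,
    hg, fun t => ?_⟩
  rw [← hfq t]
  exact Quotient.sound ⟨g, rfl⟩
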